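/- arXiv:math/9802036 — 2 statements merged into one kernel-verified Lean document; each statement's English description precedes it below -/
import Mathlib

section
/- Let K be a field, n a natural number, and q ∈ K a nonzero element such that q^{2k} ≠ 1 for all 1 ≤ k ≤ n. Let f : K∖{0} → K be any function, and let D_q^n denote the n-fold iterate of the q-difference operator applied to f. Then for every nonzero x ∈ K, (D_q^n f)(x) = (q − q^{−1})^{−n} x^{−n} ∑_{i=0}^{n} (−1)^i q^{(n−1)(2i−n)/2} [n choose i] f(q^{n−2i} x), where the exponent (n−1)(2i−n)/2 is always an integer. -/
/-- The symmetric q-integer [k] = (q^k - q^{-k})/(q - q^{-1}). -/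
noncomputable def qInt {K : Type*} [Field K] (q : K) (k : ℕ) : K :=
  (q ^ (k : ℤ) - q ^ (-(k : ℤ))) / (q - q⁻¹)

/-- The symmetric q-factorial [k]! = [1][2]⋯[k]. -/
noncomputable def qFact {K : Type*} [Field K] (q : K) (k : ℕ) : K :=
  ∏ i ∈ Finset.range k, qInt q (i + 1)

/-- The symmetric q-binomial coefficient [n choose r] = [n]!/([r]![n-r]!). -/
noncomputable def qBinom {K : Type*} [Field K] (q : K) (n r : ℕ) : K :=
  qFact q n / (qFact q r * qFact q (n - r))

/-- The q-difference operator D_q acting on functions K → K. -/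
noncomputable def qDiff {K : Type*} [Field K] (q : K) (f : K → K) : K → K :=
  fun x => (f (q * x) - f (q⁻¹ * x)) / ((q - q⁻¹) * x)

/-!
Put `c = q - q⁻¹` and write `D_q^n f (x) = (c x)^{-n} S_n f (x)`. Unfolding one more `D_q` turns the
theorem into the recurrence `S_{n+1} f (x) = q^{-n} S_n f (q x) - q^n S_n f (q⁻¹ x)`. To verify
it, multiply the `i`-th term of `S_{n+1}` by `[n+1] = q^{-i} [n+1-i] + q^{n+1-i} [i]` and absorb
the factors `[n+1-i]` and `[i]` into the binomial `[n+1 choose i]`: the two parts become the terms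
of the two sums on the right. Since `[0] = 0`, the boundary terms vanish without the separate
treatment that Pascal's rule would require.
-/

section

variable {K : Type*} [Field K] {q : K}

lemma sub_inv_ne_zero_of_sq_ne_one {y : K} (hy : y ≠ 0) (hy2 : y ^ 2 ≠ 1) : y - y⁻¹ ≠ 0 := by
  rwa [sub_ne_zero, ne_eq, ← mul_eq_one_iff_eq_inv₀ hy, ← sq]

lemma qInt_zero (q : K) : qInt q 0 = 0 := by
  simp [qInt]

lemma qInt_ne_zero (hq : q ≠ 0) {k : ℕ} (hk : q ^ (2 * k) ≠ 1) : qInt q k ≠ 0 := by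
  have hq2 : q ^ 2 ≠ 1 := fun h => hk (by rw [pow_mul, h, one_pow])
  have hqk : (q ^ k) ^ 2 ≠ 1 := by rwa [← pow_mul, mul_comm]
  rw [qInt, zpow_neg, zpow_natCast]
  exact div_ne_zero (sub_inv_ne_zero_of_sq_ne_one (pow_ne_zero k hq) hqk)
    (sub_inv_ne_zero_of_sq_ne_one hq hq2)

lemma qInt_add (hq : q ≠ 0) (m n : ℕ) :
    qInt q (m + n) = (q ^ n)⁻¹ * qInt q m + q ^ m * qInt q n := by
  simp only [qInt, zpow_neg, zpow_natCast, pow_add, mul_inv, mul_div_assoc', ← add_div]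
  congr 1
  field_simp
  ring

lemma qInt_eq_add_of_le (hq : q ≠ 0) {n i : ℕ} (hi : i ≤ n) :
    qInt q n = (q ^ i)⁻¹ * qInt q (n - i) + q ^ (n - i) * qInt q i := by
  rw [← qInt_add hq, Nat.sub_add_cancel hi]

lemma qFact_succ (q : K) (n : ℕ) : qFact q (n + 1) = qFact q n * qInt q (n + 1) :=
  Finset.prod_range_succ _ n

lemma qInt_sub_mul_qBinom_succ {n i : ℕ} (hi : i ≤ n) (h : qInt q (n + 1 - i) ≠ 0) :
    qInt q (n + 1 - i) * qBinom q (n + 1) i = qInt q (n + 1) * qBinom q n i := by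
  rw [Nat.succ_sub hi] at h ⊢
  simp only [qBinom, Nat.succ_sub hi, qFact_succ]
  rw [← mul_assoc (qFact q i), mul_comm (qInt q (n - i + 1)), div_mul_eq_mul_div,
    mul_div_mul_right _ _ h, mul_comm (qFact q n), mul_div_assoc]

lemma qInt_succ_mul_qBinom_succ_succ (n : ℕ) {i : ℕ} (h : qInt q (i + 1) ≠ 0) :
    qInt q (i + 1) * qBinom q (n + 1) (i + 1) = qInt q (n + 1) * qBinom q n i := by
  simp only [qBinom, Nat.add_sub_add_right, qFact_succ]
  rw [mul_right_comm (qFact q i), mul_comm (qInt q (i + 1)), div_mul_eq_mul_div,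
    mul_div_mul_right _ _ h, mul_comm (qFact q n), mul_div_assoc]

/-- The exponent `(n - 1)(2i - n) / 2` of `q` in the coefficients of `D_q^n`. The integer division
is exact, as `(n - 1)(2i - n)` has the parity of `(n - 1) n`. -/
def qDiffExponent (n i : ℤ) : ℤ :=
  ((n - 1) * (2 * i - n)) / 2

lemma qDiffExponent_succ_left (n i : ℤ) :
    qDiffExponent (n + 1) i = qDiffExponent n i + (i - n) := by
  rw [qDiffExponent, qDiffExponent, ← Int.add_mul_ediv_right _ _ two_ne_zero]
  congr 1
  ring

lemma qDiffExponent_succ_succ (n i : ℤ) :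
    qDiffExponent (n + 1) (i + 1) = qDiffExponent n i + i := by
  rw [qDiffExponent, qDiffExponent, ← Int.add_mul_ediv_right _ _ two_ne_zero]
  congr 1
  ring

/-- The coefficient of `f (q ^ (n - 2 * i) * x)` in the expansion of the `n`-fold `q`-difference
of `f`, up to the factor `((q - q⁻¹) * x) ^ (-n)` common to all `i`. -/
noncomputable def qDiffCoeff (q : K) (n i : ℕ) : K :=
  (-1) ^ i * q ^ qDiffExponent n i * qBinom q n i

lemma qInt_sub_mul_qDiffCoeff_succ (hq : q ≠ 0) {n i : ℕ} (hi : i ≤ n)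
    (h : qInt q (n + 1 - i) ≠ 0) :
    (q ^ i)⁻¹ * qInt q (n + 1 - i) * qDiffCoeff q (n + 1) i =
      qInt q (n + 1) * ((q ^ n)⁻¹ * qDiffCoeff q n i) := by
  have absorption := qInt_sub_mul_qBinom_succ hi h
  simp only [qDiffCoeff, Nat.cast_succ, qDiffExponent_succ_left, zpow_add₀ hq, zpow_sub₀ hq,
    zpow_natCast]
  field_simp
  exact absorption

lemma qInt_succ_mul_qDiffCoeff_succ_succ (hq : q ≠ 0) {n i : ℕ} (hi : i ≤ n)
    (h : qInt q (i + 1) ≠ 0) :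
    q ^ (n - i) * qInt q (i + 1) * qDiffCoeff q (n + 1) (i + 1) =
      -(qInt q (n + 1) * (q ^ n * qDiffCoeff q n i)) := by
  have absorption := qInt_succ_mul_qBinom_succ_succ n h
  have pow_split : q ^ (n - i) * q ^ i = q ^ n := pow_sub_mul_pow q hi
  simp only [qDiffCoeff, Nat.cast_succ, qDiffExponent_succ_succ, zpow_add₀ hq, zpow_natCast,
    ← pow_split]
  linear_combination
    (-1) ^ (i + 1) * q ^ qDiffExponent n i * q ^ (n - i) * q ^ i * absorption

lemma sum_qDiffCoeff_succ (hq : q ≠ 0) (n : ℕ)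
    (hroot : ∀ k : ℕ, 1 ≤ k → k ≤ n + 1 → q ^ (2 * k) ≠ 1) (g : ℕ → K) :
    ∑ i ∈ Finset.range (n + 2), qDiffCoeff q (n + 1) i * g i =
      (q ^ n)⁻¹ * ∑ i ∈ Finset.range (n + 1), qDiffCoeff q n i * g i -
        q ^ n * ∑ i ∈ Finset.range (n + 1), qDiffCoeff q n i * g (i + 1) := by
  have qInt_ne {k : ℕ} (hk : 1 ≤ k) (hkn : k ≤ n + 1) : qInt q k ≠ 0 :=
    qInt_ne_zero hq (hroot k hk hkn)
  have split_term : ∀ i ∈ Finset.range (n + 2),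
      qInt q (n + 1) * (qDiffCoeff q (n + 1) i * g i) =
        (q ^ i)⁻¹ * qInt q (n + 1 - i) * qDiffCoeff q (n + 1) i * g i +
          q ^ (n + 1 - i) * qInt q i * qDiffCoeff q (n + 1) i * g i := fun i hi => by
    rw [qInt_eq_add_of_le hq (Finset.mem_range_succ_iff.mp hi)]
    ring
  have left_part : ∑ i ∈ Finset.range (n + 2),
      (q ^ i)⁻¹ * qInt q (n + 1 - i) * qDiffCoeff q (n + 1) i * g i =
        qInt q (n + 1) * ((q ^ n)⁻¹ * ∑ i ∈ Finset.range (n + 1), qDiffCoeff q n i * g i) := by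
    rw [Finset.sum_range_succ, Nat.sub_self, qInt_zero, mul_zero, zero_mul, zero_mul, add_zero,
      Finset.mul_sum, Finset.mul_sum]
    refine Finset.sum_congr rfl fun i hi => ?_
    have hin : i ≤ n := Finset.mem_range_succ_iff.mp hi
    rw [qInt_sub_mul_qDiffCoeff_succ hq hin (qInt_ne (by lia) (by lia))]
    ring
  have right_part : ∑ i ∈ Finset.range (n + 2),
      q ^ (n + 1 - i) * qInt q i * qDiffCoeff q (n + 1) i * g i =
        -(qInt q (n + 1) *
          (q ^ n * ∑ i ∈ Finset.range (n + 1), qDiffCoeff q n i * g (i + 1))) := by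
    rw [Finset.sum_range_succ', qInt_zero, mul_zero, zero_mul, zero_mul, add_zero,
      Finset.mul_sum, Finset.mul_sum, ← Finset.sum_neg_distrib]
    refine Finset.sum_congr rfl fun i hi => ?_
    have hin : i ≤ n := Finset.mem_range_succ_iff.mp hi
    rw [Nat.add_sub_add_right,
      qInt_succ_mul_qDiffCoeff_succ_succ hq hin (qInt_ne (by lia) (by lia))]
    ring
  apply mul_left_cancel₀ (qInt_ne (Nat.le_add_left 1 n) le_rfl)
  rw [Finset.mul_sum, Finset.sum_congr rfl split_term, Finset.sum_add_distrib, left_part,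
    right_part]
  ring

/-- The numerator of the `n`-fold `q`-difference of `f` at `x`, that is
`((q - q⁻¹) * x) ^ n * (D_q^n f)(x)`. -/
noncomputable def qDiffSum (q : K) (n : ℕ) (f : K → K) (x : K) : K :=
  ∑ i ∈ Finset.range (n + 1), qDiffCoeff q n i * f (q ^ ((n : ℤ) - 2 * (i : ℤ)) * x)

lemma qDiffSum_zero (q : K) (f : K → K) (x : K) : qDiffSum q 0 f x = f x := by
  simp [qDiffSum, qDiffCoeff, qDiffExponent, qBinom, qFact]

lemma qDiffSum_succ (hq : q ≠ 0) (n : ℕ)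
    (hroot : ∀ k : ℕ, 1 ≤ k → k ≤ n + 1 → q ^ (2 * k) ≠ 1) (f : K → K) (x : K) :
    qDiffSum q (n + 1) f x =
      (q ^ n)⁻¹ * qDiffSum q n f (q * x) - q ^ n * qDiffSum q n f (q⁻¹ * x) := by
  have shift_up (i : ℕ) : q ^ ((n : ℤ) - 2 * i) * (q * x) =
      q ^ (((n + 1 : ℕ) : ℤ) - 2 * i) * x := by
    rw [← mul_assoc, ← zpow_add_one₀ hq]
    congr 2
    lia
  have shift_down (i : ℕ) : q ^ ((n : ℤ) - 2 * i) * (q⁻¹ * x) =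
      q ^ (((n + 1 : ℕ) : ℤ) - 2 * (i + 1 : ℕ)) * x := by
    rw [← mul_assoc, ← zpow_sub_one₀ hq]
    congr 2
    lia
  simp only [qDiffSum, shift_up, shift_down]
  exact sum_qDiffCoeff_succ hq n hroot fun i => f (q ^ (((n + 1 : ℕ) : ℤ) - 2 * i) * x)

end

/-- Iterated q-difference operator:
(D_q^n f)(x) = (q − q^{−1})^{−n} x^{−n} ∑_{i=0}^{n} (−1)^i q^{(n−1)(2i−n)/2}
[n choose i] f(q^{n−2i} x). -/
theorem iterated_q_difference {K : Type*} [Field K] (n : ℕ) (q : K) (hq : q ≠ 0)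
    (hroot : ∀ k : ℕ, 1 ≤ k → k ≤ n → q ^ (2 * k) ≠ 1) (f : K → K) (x : K) (hx : x ≠ 0) :
    (qDiff q)^[n] f x =
      ((q - q⁻¹) ^ n)⁻¹ * (x ^ n)⁻¹ *
        ∑ i ∈ Finset.range (n + 1),
          (-1) ^ i * q ^ ((((n : ℤ) - 1) * (2 * (i : ℤ) - (n : ℤ))) / 2) * qBinom q n i *
            f (q ^ ((n : ℤ) - 2 * (i : ℤ)) * x) := by
  change (qDiff q)^[n] f x = ((q - q⁻¹) ^ n)⁻¹ * (x ^ n)⁻¹ * qDiffSum q n f x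
  induction n generalizing x with
  | zero => simp [qDiffSum_zero]
  | succ n ih =>
    have ih_all := ih fun k hk hkn => hroot k hk (Nat.le_succ_of_le hkn)
    calc (qDiff q)^[n + 1] f x
        = ((qDiff q)^[n] f (q * x) - (qDiff q)^[n] f (q⁻¹ * x)) / ((q - q⁻¹) * x) := by
          rw [Function.iterate_succ_apply', qDiff]
      _ = ((q - q⁻¹) ^ (n + 1))⁻¹ * (x ^ (n + 1))⁻¹ *
            ((q ^ n)⁻¹ * qDiffSum q n f (q * x) - q ^ n * qDiffSum q n f (q⁻¹ * x)) := by
          rw [ih_all _ (mul_ne_zero hq hx), ih_all _ (mul_ne_zero (inv_ne_zero hq) hx)]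
          generalize q - q⁻¹ = c
          simp only [mul_pow, inv_pow]
          field_simp
          ring
      _ = ((q - q⁻¹) ^ (n + 1))⁻¹ * (x ^ (n + 1))⁻¹ * qDiffSum q (n + 1) f x := by
          rw [qDiffSum_succ hq n hroot]
end

section
/- Let K be a field, m ≥ 1 a natural number, and q ∈ K a nonzero element such that q^{2k} ≠ 1 for all 1 ≤ k ≤ m. Then for every w ∈ K and all pairwise distinct z_1, …, z_m ∈ K, the following identity holds: ∑_{σ ∈ S_m} ∑_{r=0}^{m} [m choose r] · (∏_{k=1}^{r} (w − q^{m−1} z_{σ(k)})) · (∏_{k=r+1}^{m} (z_{σ(k)} − q^{m−1} w)) · (∏_{1 ≤ i < j ≤ m} (z_{σ(i)} − q² z_{σ(j)})/(z_{σ(i)} − z_{σ(j)})) = 0, where S_m is the symmetric group on {1, …, m}. -/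
/-!
Write `t = q ^ 2`, `u = q ^ (m - 1)` and `c i j = (z i - t * z j) / (z i - z j)`. For every finite
set `s` of indices, `∑ i ∈ s, ∏ j ∈ s \ {i}, c i j` equals `1 + t + ⋯ + t ^ (#s - 1)`. Hence, for
fixed `r`, summing over the permutations that put a given `r`-element set `I` in the first `r`
places yields the `t`-factorials of `r` and `m - r` times `∏ i ∈ I, ∏ j ∉ I, c i j`. These
factorials cancel the denominator of the `q`-binomial coefficient, and the weight left on `I` is
proportional to `u ^ r * t ^ (m - r).choose 2`.

The resulting sum over all `I`, times the Vandermonde determinant of `z`, is the expansion by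
multilinearity in the rows of the determinant with entries
`u * (w - u * z i) * z i ^ k + (z i - u * w) * (t * z i) ^ k`. As `u ^ 2 = t ^ (m - 1)`, the
monomial of degree `m` cancels, so this determinant is the Vandermonde determinant times
`∏ k, u * w * (1 - t ^ k)`, whose factor at `k = 0` vanishes.
-/

open Finset

section Symmetrization

variable {ι R : Type*} [CommSemiring R] {m : ℕ}

/-- The symmetrization over `Perm (Fin m)` of the weight `∏ k, f k (y k)` times the kernel product
`∏_{i < j} c (y i) (y j)`. The points are an embedding `y : Fin m ↪ ι`, so that one of them can be
removed without changing the index type `ι` of the weight and of the kernel. -/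
def symmetrization (c : ι → ι → R) (f : Fin m → ι → R) (y : Fin m ↪ ι) : R :=
  ∑ σ : Equiv.Perm (Fin m), (∏ k, f k (y (σ k))) * ∏ i, ∏ j ∈ Ioi i, c (y (σ i)) (y (σ j))

/-- An enumeration of the points of `y` other than `y p`. It is the one induced by
`Equiv.Perm.decomposeFin`. -/
def embeddingErase (y : Fin (m + 1) ↪ ι) (p : Fin (m + 1)) : Fin m ↪ ι :=
  (Fin.succEmb m).trans ((Equiv.swap 0 p).toEmbedding.trans y)

theorem map_univ_embeddingErase [DecidableEq ι] (y : Fin (m + 1) ↪ ι) (p : Fin (m + 1)) :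
    univ.map (embeddingErase y p) = (univ.map y).erase (y p) := by
  have huniv : univ.map y = univ.map ((Equiv.swap 0 p).toEmbedding.trans y) := by
    rw [← map_map, map_univ_equiv]
  rw [huniv, Fin.univ_succ, map_cons, embeddingErase, ← map_map]
  have hp : ((Equiv.swap 0 p).toEmbedding.trans y) 0 = y p := by simp
  rw [← hp, erase_cons]
  rfl

theorem symmetrization_succ [DecidableEq ι] (c : ι → ι → R) (f : Fin (m + 1) → ι → R)
    (y : Fin (m + 1) ↪ ι) :
    symmetrization c f y = ∑ p, f 0 (y p) * (∏ x ∈ (univ.map y).erase (y p), c (y p) x) *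
      symmetrization c (fun k => f k.succ) (embeddingErase y p) := by
  rw [symmetrization, ← Equiv.sum_comp Equiv.Perm.decomposeFin.symm, Fintype.sum_prod_type]
  refine sum_congr rfl fun p _ => ?_
  rw [symmetrization, mul_sum]
  refine sum_congr rfl fun τ _ => ?_
  have hkernel : ∏ k, c (y p) (embeddingErase y p (τ k)) =
      ∏ x ∈ (univ.map y).erase (y p), c (y p) x := by
    rw [← map_univ_embeddingErase, prod_map,
      Equiv.prod_comp τ (fun k => c (y p) (embeddingErase y p k))]
  rw [← hkernel]
  simp only [Fin.prod_univ_succ, Fin.prod_Ioi_zero, Fin.prod_Ioi_succ,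
    Equiv.Perm.decomposeFin_symm_apply_zero, Equiv.Perm.decomposeFin_symm_apply_succ]
  exact mul_mul_mul_comm _ _ _ _

theorem symmetrization_succ_of_forall_eq [DecidableEq ι] {c : ι → ι → R}
    {f : Fin (m + 1) → ι → R} {g : Finset ι → R}
    (hg : ∀ y : Fin m ↪ ι, symmetrization c (fun k => f k.succ) y = g (univ.map y))
    (y : Fin (m + 1) ↪ ι) :
    symmetrization c f y = ∑ x ∈ univ.map y,
      f 0 x * (∏ x' ∈ (univ.map y).erase x, c x x') * g ((univ.map y).erase x) := by
  simp only [symmetrization_succ, hg, map_univ_embeddingErase, sum_map]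

end Symmetrization

section SplitSum

variable {ι R : Type*} [DecidableEq ι]

theorem sum_powersetCard_succ_sum_mem [AddCommMonoid R] (s : Finset ι) (r : ℕ)
    (F : ι → Finset ι → R) :
    ∑ I ∈ powersetCard (r + 1) s, ∑ i ∈ I, F i (I.erase i) =
      ∑ i ∈ s, ∑ J ∈ powersetCard r (s.erase i), F i J := by
  rw [sum_sigma', sum_sigma']
  refine sum_bij' (fun p _ => ⟨p.2, p.1.erase p.2⟩) (fun p _ => ⟨insert p.1 p.2, p.1⟩)
    ?_ ?_ ?_ ?_ fun _ _ => rfl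
  · rintro ⟨I, i⟩ hI
    simp only [mem_sigma, mem_powersetCard] at hI ⊢
    obtain ⟨⟨hIs, hcard⟩, hi⟩ := hI
    exact ⟨hIs hi, erase_subset_erase _ hIs, by rw [card_erase_of_mem hi, hcard]; rfl⟩
  · rintro ⟨i, J⟩ hJ
    simp only [mem_sigma, mem_powersetCard, subset_erase] at hJ ⊢
    obtain ⟨hi, ⟨hJs, hiJ⟩, hcard⟩ := hJ
    exact ⟨⟨insert_subset hi hJs, by rw [card_insert_of_notMem hiJ, hcard]⟩, mem_insert_self _ _⟩
  · rintro ⟨I, i⟩ hI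
    simp only [mem_sigma] at hI
    simp only [insert_erase hI.2]
  · rintro ⟨i, J⟩ hJ
    simp only [mem_sigma, mem_powersetCard, subset_erase] at hJ
    simp only [erase_insert hJ.2.1.2]

variable [CommSemiring R]

/-- The sum over the `r`-element subsets `I` of `s` of the weight `a` on `I`, the weight `b` on
`s \ I`, and the kernel `c` between `I` and `s \ I`: up to a constant, the symmetrization of
`a` in the first `r` places and `b` in the others. -/
def splitSum (c : ι → ι → R) (a b : ι → R) (r : ℕ) (s : Finset ι) : R :=
  ∑ I ∈ powersetCard r s,
    (∏ i ∈ I, a i) * (∏ j ∈ s \ I, b j) * ∏ i ∈ I, ∏ j ∈ s \ I, c i j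

theorem splitSum_zero (c : ι → ι → R) (a b : ι → R) (s : Finset ι) :
    splitSum c a b 0 s = ∏ j ∈ s, b j := by
  simp [splitSum]

theorem splitSum_const_mul (c : ι → ι → R) (u : R) (a b : ι → R) (r : ℕ) (s : Finset ι) :
    splitSum c (fun i => u * a i) b r s = u ^ r * splitSum c a b r s := by
  rw [splitSum, splitSum, mul_sum]
  refine sum_congr rfl fun I hI => ?_
  rw [prod_mul_distrib, prod_const, (mem_powersetCard.1 hI).2]
  ring

variable {c : ι → ι → R} {n : ℕ → R}

theorem sum_mul_splitSum_erase (hc : ∀ s : Finset ι, ∑ i ∈ s, ∏ j ∈ s.erase i, c i j = n #s)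
    (a b : ι → R) (r : ℕ) (s : Finset ι) :
    ∑ i ∈ s, a i * (∏ j ∈ s.erase i, c i j) * splitSum c a b r (s.erase i) =
      n (r + 1) * splitSum c a b (r + 1) s := by
  simp only [splitSum, mul_sum]
  rw [← sum_powersetCard_succ_sum_mem s r fun i J => a i * (∏ j ∈ s.erase i, c i j) *
    ((∏ i ∈ J, a i) * (∏ j ∈ s.erase i \ J, b j) * ∏ i' ∈ J, ∏ j ∈ s.erase i \ J, c i' j)]
  refine sum_congr rfl fun I hI => ?_
  obtain ⟨hIs, hcard⟩ := mem_powersetCard.1 hI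
  rw [← hcard, ← hc I, sum_mul]
  refine sum_congr rfl fun i hi => ?_
  have hsdiff : s.erase i \ I.erase i = s \ I := by grind
  have hkernel : ∏ j ∈ s.erase i, c i j = (∏ j ∈ s \ I, c i j) * ∏ j ∈ I.erase i, c i j := by
    rw [← hsdiff, prod_sdiff (erase_subset_erase i hIs)]
  rw [hsdiff, hkernel, ← mul_prod_erase I a hi, ← mul_prod_erase I _ hi]
  ring

theorem symmetrization_const (hc : ∀ s : Finset ι, ∑ i ∈ s, ∏ j ∈ s.erase i, c i j = n #s)
    (b : ι → R) {m : ℕ} (y : Fin m ↪ ι) :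
    symmetrization c (fun _ => b) y = (∏ k ∈ range m, n (k + 1)) * ∏ x ∈ univ.map y, b x := by
  induction m with
  | zero => simp [symmetrization]
  | succ m ih =>
    rw [symmetrization_succ_of_forall_eq (g := fun s => (∏ k ∈ range m, n (k + 1)) * ∏ x ∈ s, b x)
      ih, prod_range_succ, mul_right_comm]
    have hn : n (m + 1) = ∑ x ∈ univ.map y, ∏ j ∈ (univ.map y).erase x, c x j := by
      rw [hc, card_map, card_univ, Fintype.card_fin]
    rw [hn, mul_sum]
    refine sum_congr rfl fun x hx => ?_
    rw [← mul_prod_erase _ b hx]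
    ring

theorem symmetrization_ite_lt (hc : ∀ s : Finset ι, ∑ i ∈ s, ∏ j ∈ s.erase i, c i j = n #s)
    (a b : ι → R) {m r : ℕ} (hr : r ≤ m) (y : Fin m ↪ ι) :
    symmetrization c (fun k x => if (k : ℕ) < r then a x else b x) y =
      (∏ k ∈ range r, n (k + 1)) * (∏ k ∈ range (m - r), n (k + 1)) *
        splitSum c a b r (univ.map y) := by
  induction r generalizing m with
  | zero => simpa [splitSum_zero] using symmetrization_const hc b y
  | succ r ih =>
    obtain ⟨m, rfl⟩ := Nat.exists_eq_add_one_of_ne_zero (Nat.ne_zero_of_lt hr)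
    have hrm : r ≤ m := Nat.le_of_succ_le_succ hr
    rw [symmetrization_succ_of_forall_eq (g := fun s => (∏ k ∈ range r, n (k + 1)) *
        (∏ k ∈ range (m - r), n (k + 1)) * splitSum c a b r s) fun y => by
          simpa only [Fin.val_succ, Nat.add_lt_add_iff_right] using ih hrm y,
      prod_range_succ, Nat.add_sub_add_right, mul_right_comm _ (n (r + 1)), mul_assoc _ (n (r + 1)),
      ← sum_mul_splitSum_erase hc, mul_sum]
    refine sum_congr rfl fun x _ => ?_
    simp only [Fin.val_zero, Nat.succ_pos, if_true]
    ring

end SplitSum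

section Kernel

variable {ι K : Type*} [Field K]

/-- The Hall–Littlewood kernel `(z i - t * z j) / (z i - z j)`, which is meant for `z i ≠ z j`: in
Lean it is `0` on the diagonal. -/
def hallLittlewoodKernel (t : K) (z : ι → K) (i j : ι) : K :=
  (z i - t * z j) / (z i - z j)

variable [DecidableEq ι]

-- Lagrange interpolation at the nodes `z i` of the polynomial `∏ (X - t * z i) - ∏ (X - z i)`,
-- whose degree is less than `#s` because both products are monic.
open Polynomial in
theorem prod_sub_mul_div_sub (t : K) {z : ι → K} {s : Finset ι} (hz : Set.InjOn z s) {x : K}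
    (hx : ∀ i ∈ s, x ≠ z i) :
    ∏ i ∈ s, (x - t * z i) / (x - z i) = 1 + (1 - t) * ∑ i ∈ s, z i / (x - z i) *
      ∏ j ∈ s.erase i, hallLittlewoodKernel t z i j := by
  have hnodal : ∏ i ∈ s, (x - z i) ≠ 0 := prod_ne_zero_iff.2 fun i hi => sub_ne_zero.2 (hx i hi)
  have hdegree : (Lagrange.nodal s (fun i => t * z i) - Lagrange.nodal s z).degree < #s := by
    rw [← Lagrange.degree_nodal (s := s) (v := fun i => t * z i)]
    refine degree_sub_lt_left ?_ Lagrange.nodal_ne_zero ?_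
    · rw [Lagrange.degree_nodal, Lagrange.degree_nodal]
    · rw [Lagrange.nodal_monic.leadingCoeff, Lagrange.nodal_monic.leadingCoeff]
  have heval := congrArg (eval x) (Lagrange.eq_interpolate hz hdegree)
  rw [Lagrange.eval_interpolate_not_at_node _ hx, eval_sub, Lagrange.eval_nodal,
    Lagrange.eval_nodal, sub_eq_iff_eq_add'] at heval
  rw [prod_div_distrib, heval, add_div, div_self hnodal, mul_div_cancel_left₀ _ hnodal, mul_sum]
  congr 1
  refine sum_congr rfl fun i hi => ?_
  rw [eval_sub, Lagrange.eval_nodal_at_node hi, sub_zero, Lagrange.eval_nodal,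
    ← mul_prod_erase s _ hi, Lagrange.nodalWeight]
  simp only [hallLittlewoodKernel, div_eq_mul_inv, prod_mul_distrib]
  ring

theorem sum_prod_hallLittlewoodKernel (t : K) {z : ι → K} {s : Finset ι} (hz : Set.InjOn z s) :
    ∑ i ∈ s, ∏ j ∈ s.erase i, hallLittlewoodKernel t z i j = ∑ k ∈ range #s, t ^ k := by
  induction s using Finset.induction_on with
  | empty => simp
  | insert a s ha ih =>
    have hzs : Set.InjOn z s := hz.mono (by simp)
    have hne : ∀ i ∈ s, z a ≠ z i := fun i hi h =>
      ha (hz (mem_insert_self a s) (mem_insert_of_mem hi) h ▸ hi)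
    have hold : ∀ i ∈ s, ∏ j ∈ (insert a s).erase i, hallLittlewoodKernel t z i j =
        (t - (1 - t) * (z i / (z a - z i))) * ∏ j ∈ s.erase i, hallLittlewoodKernel t z i j := by
      intro i hi
      have hai : a ≠ i := fun h => ha (h ▸ hi)
      rw [erase_insert_of_ne hai, prod_insert (by simp [ha]), hallLittlewoodKernel]
      congr 1
      have h₁ : z a - z i ≠ 0 := sub_ne_zero.2 (hne i hi)
      have h₂ : z i - z a ≠ 0 := sub_ne_zero.2 (hne i hi).symm
      field_simp
      ring
    have hnew := prod_sub_mul_div_sub t hzs hne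
    rw [sum_insert ha, erase_insert ha, sum_congr rfl hold, card_insert_of_notMem ha,
      geom_sum_succ, ← ih hzs]
    simp only [sub_mul, sum_sub_distrib, mul_assoc, ← mul_sum]
    simp only [hallLittlewoodKernel] at hnew ⊢
    rw [hnew]
    ring

end Kernel

section Determinant

open Matrix

theorem prod_prod_lt_eq_pow_choose_two {α M : Type*} [LinearOrder α] [CommMonoid M] (t : M)
    (J : Finset α) :
    ∏ i ∈ J, ∏ j ∈ J with i < j, t = t ^ (#J).choose 2 := by
  induction J using Finset.induction_on_max with
  | empty => simp
  | insert a J hJ ih =>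
    have ha : a ∉ J := fun h => lt_irrefl a (hJ a h)
    have hmax : {j ∈ insert a J | a < j} = ∅ := by grind
    have hlt : ∀ i ∈ J, ∏ j ∈ insert a J with i < j, t = t * ∏ j ∈ J with i < j, t := by
      intro i hi
      rw [filter_insert, if_pos (hJ i hi), prod_insert (by simp [ha])]
    rw [prod_insert ha, hmax, prod_empty, one_mul, prod_congr rfl hlt, prod_mul_distrib, ih,
      prod_const, card_insert_of_notMem ha, Nat.choose_succ_succ' _ 1, Nat.choose_one_right,
      pow_add]

-- Each column is a combination of two adjacent monomials (of one monomial for the last column), so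
-- the matrix is the Vandermonde matrix times a lower triangular one.
theorem det_affine_mul_pow_add {R : Type*} [CommRing R] {m : ℕ} (t a₀ a₁ b₀ b₁ : R)
    (h : a₁ + b₁ * t ^ (m - 1) = 0) (z : Fin m → R) :
    (of fun i k : Fin m => (a₀ + a₁ * z i) * z i ^ (k : ℕ) +
      (b₀ + b₁ * z i) * (t * z i) ^ (k : ℕ)).det =
      (vandermonde z).det * ∏ k : Fin m, (a₀ + b₀ * t ^ (k : ℕ)) := by
  set L : Matrix (Fin m) (Fin m) R := of fun l k =>
    (if l = k then a₀ + b₀ * t ^ (k : ℕ) else 0) +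
      (if (l : ℕ) = k + 1 then a₁ + b₁ * t ^ (k : ℕ) else 0) with hL
  have htriangular : L.BlockTriangular OrderDual.toDual := by
    intro l k hlk
    have hlk : (l : ℕ) < k := hlk
    simp [hL, Fin.ext_iff, hlk.ne, (hlk.trans (Nat.lt_succ_self _)).ne]
  have hmul : (of fun i k : Fin m => (a₀ + a₁ * z i) * z i ^ (k : ℕ) +
      (b₀ + b₁ * z i) * (t * z i) ^ (k : ℕ)) = vandermonde z * L := by
    ext i k
    simp only [hL, mul_apply, of_apply, vandermonde_apply, mul_add, mul_ite, mul_zero,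
      sum_add_distrib, sum_ite_eq', mem_univ, if_true]
    by_cases hk : (k : ℕ) + 1 < m
    · rw [sum_eq_single (⟨k + 1, hk⟩ : Fin m)]
      · simp only [if_true]
        ring
      · intro l _ hl
        rw [if_neg]
        exact fun h => hl (Fin.ext h)
      · simp
    · have hk' : (k : ℕ) = m - 1 := by omega
      rw [sum_eq_zero fun l _ => if_neg (by omega), hk', mul_pow]
      linear_combination z i ^ (m - 1) * z i * h
  rw [hmul, det_mul, det_of_isLowerTriangular L htriangular]
  simp [hL]

variable {K : Type*} [Field K] {m : ℕ}

theorem det_vandermonde_ite_mem (t : K) {z : Fin m → K} (hz : Function.Injective z)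
    (I : Finset (Fin m)) :
    (vandermonde fun i => if i ∈ I then z i else t * z i).det =
      (vandermonde z).det * (t ^ (#(univ \ I)).choose 2 *
        ∏ i ∈ I, ∏ j ∈ univ \ I, hallLittlewoodKernel t z i j) := by
  have hself : ∏ i, ∏ j ∈ Ioi i, (if i ∉ I ∧ j ∉ I then t else 1) =
      t ^ (#(univ \ I)).choose 2 := by
    rw [← prod_prod_lt_eq_pow_choose_two,
      ← prod_subset (subset_univ (univ \ I)) (by simp +contextual)]
    refine prod_congr rfl fun i hi => ?_
    simp only [(mem_sdiff.1 hi).2, not_false_eq_true, true_and, ← prod_filter]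
    exact prod_congr (by grind) fun _ _ => rfl
  have hcross : ∏ i, ∏ j ∈ {i}ᶜ, (if i ∈ I ∧ j ∉ I then hallLittlewoodKernel t z i j else 1) =
      ∏ i ∈ I, ∏ j ∈ univ \ I, hallLittlewoodKernel t z i j := by
    rw [← prod_subset (subset_univ I) (by simp +contextual)]
    refine prod_congr rfl fun i hi => ?_
    simp only [hi, true_and, ← prod_filter]
    exact prod_congr (by grind [mem_compl]) fun _ _ => rfl
  rw [← hself, ← hcross, ← prod_prod_Ioi_mul_eq_prod_prod_off_diag, det_vandermonde,
    det_vandermonde]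
  simp only [← prod_mul_distrib]
  refine prod_congr rfl fun i _ => prod_congr rfl fun j hj => ?_
  have hij : i ≠ j := (mem_Ioi.1 hj).ne
  have h₁ : z i - z j ≠ 0 := sub_ne_zero.2 (hz.ne hij)
  have h₂ : z j - z i ≠ 0 := sub_ne_zero.2 (hz.ne hij.symm)
  by_cases hi : i ∈ I <;> by_cases hj : j ∈ I <;>
    simp only [hi, hj, hallLittlewoodKernel, not_true, not_false_eq_true, and_true, and_false,
      if_true, if_false, mul_one, one_mul] <;> grind

theorem det_mul_pow_add_mul_pow (t : K) {z : Fin m → K} (hz : Function.Injective z)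
    (a b : Fin m → K) :
    (of fun i k : Fin m => a i * z i ^ (k : ℕ) + b i * (t * z i) ^ (k : ℕ)).det =
      (vandermonde z).det * ∑ r ∈ range (m + 1),
        t ^ (m - r).choose 2 * splitSum (hallLittlewoodKernel t z) a b r univ := by
  have hexpand : (of fun i k : Fin m => a i * z i ^ (k : ℕ) + b i * (t * z i) ^ (k : ℕ)).det =
      ∑ I : Finset (Fin m), (of fun i k : Fin m => (if i ∈ I then a i else b i) *
        vandermonde (fun i => if i ∈ I then z i else t * z i) i k).det := by
    refine (detRowAlternating.map_add_univ (fun i (k : Fin m) => a i * z i ^ (k : ℕ))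
      fun i k => b i * (t * z i) ^ (k : ℕ)).trans (sum_congr rfl fun I _ => ?_)
    congr 1
    ext i k
    by_cases hi : i ∈ I <;> simp [hi]
  rw [hexpand, ← powerset_univ, sum_powerset, card_univ, Fintype.card_fin, mul_sum]
  refine sum_congr rfl fun r _ => ?_
  rw [splitSum, mul_sum, mul_sum]
  refine sum_congr rfl fun I hI => ?_
  have hcard : #(univ \ I) = m - r := by
    rw [card_sdiff_of_subset (subset_univ I), (mem_powersetCard.1 hI).2, card_univ,
      Fintype.card_fin]
  have hweight : ∏ i, (if i ∈ I then a i else b i) = (∏ i ∈ I, a i) * ∏ j ∈ univ \ I, b j := by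
    rw [prod_ite, filter_mem_eq_inter, univ_inter, filter_notMem_eq_sdiff]
  rw [det_mul_column, hweight, det_vandermonde_ite_mem t hz, hcard]
  ring

theorem sum_pow_mul_splitSum_eq_zero [NeZero m] {t u : K} (hu : u ^ 2 = t ^ (m - 1)) (w : K)
    {z : Fin m → K} (hz : Function.Injective z) :
    ∑ r ∈ range (m + 1), u ^ r * t ^ (m - r).choose 2 *
      splitSum (hallLittlewoodKernel t z) (fun i => w - u * z i) (fun i => z i - u * w) r univ =
        0 := by
  have hdet := det_mul_pow_add_mul_pow t hz (fun i => u * (w - u * z i)) fun i => z i - u * w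
  have haffine := det_affine_mul_pow_add t (u * w) (-u ^ 2) (-(u * w)) 1 (by rw [hu]; ring) z
  have hfactor : ∏ k : Fin m, (u * w + -(u * w) * t ^ (k : ℕ)) = 0 :=
    prod_eq_zero (mem_univ 0) (by simp)
  rw [hfactor, mul_zero] at haffine
  have hmatrix : (of fun i k : Fin m => u * (w - u * z i) * z i ^ (k : ℕ) +
        (z i - u * w) * (t * z i) ^ (k : ℕ)) =
      of fun i k : Fin m => (u * w + -u ^ 2 * z i) * z i ^ (k : ℕ) +
        (-(u * w) + 1 * z i) * (t * z i) ^ (k : ℕ) := by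
    ext i k
    simp only [of_apply]
    ring
  rw [hmatrix, haffine, eq_comm, mul_eq_zero_iff_left (det_vandermonde_ne_zero_iff.2 hz)] at hdet
  simpa only [splitSum_const_mul, mul_left_comm, mul_assoc] using hdet

end Determinant

section QBinomial

variable {K : Type*} [Field K] {q : K}

theorem geom_sum_sq_eq_pow_mul_qInt (hq : q ≠ 0) (hq2 : q ^ 2 ≠ 1) (k : ℕ) :
    ∑ i ∈ range (k + 1), (q ^ 2) ^ i = q ^ k * qInt q (k + 1) := by
  have hsub : q ^ 2 - 1 ≠ 0 := sub_ne_zero.2 hq2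
  have hinv : q - q⁻¹ = (q ^ 2 - 1) / q := by field_simp
  rw [geom_sum_eq hq2, qInt, hinv, zpow_neg, zpow_natCast]
  field_simp
  ring

theorem prod_geom_sum_sq_eq_pow_mul_qFact (hq : q ≠ 0) (hq2 : q ^ 2 ≠ 1) (r : ℕ) :
    ∏ k ∈ range r, ∑ i ∈ range (k + 1), (q ^ 2) ^ i = q ^ r.choose 2 * qFact q r := by
  simp_rw [geom_sum_sq_eq_pow_mul_qInt hq hq2]
  rw [prod_mul_distrib, prod_pow_eq_pow_sum, sum_range_id, Nat.choose_two_right, qFact]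

theorem qFact_ne_zero (hq : q ≠ 0) {r : ℕ} (hroot : ∀ k, 1 ≤ k → k ≤ r → q ^ (2 * k) ≠ 1) :
    qFact q r ≠ 0 := by
  refine prod_ne_zero_iff.2 fun i hi hzero => ?_
  have hir : i + 1 ≤ r := mem_range.1 hi
  have hq2 : q ^ 2 ≠ 1 := by simpa using hroot 1 le_rfl (by omega)
  have hgeom := geom_sum_mul (q ^ 2) (i + 1)
  rw [geom_sum_sq_eq_pow_mul_qInt hq hq2, hzero, mul_zero, zero_mul, ← pow_mul] at hgeom
  exact hroot (i + 1) (Nat.le_add_left 1 i) hir (sub_eq_zero.1 hgeom.symm)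

theorem choose_two_add_choose_two_add_choose_two (r d : ℕ) :
    (r + d).choose 2 + r.choose 2 + d.choose 2 = (r + d - 1) * r + 2 * d.choose 2 := by
  have hsq (n : ℕ) : 2 * n.choose 2 + n = n * n := by
    induction n with
    | zero => rfl
    | succ n ih =>
      rw [Nat.choose_succ_succ' n 1, Nat.choose_one_right]
      linarith
  have hpred : (r + d - 1) * r + r = (r + d) * r := by
    cases r with
    | zero => simp
    | succ r =>
      rw [Nat.add_right_comm, Nat.add_sub_cancel]
      ring
  linarith [hsq (r + d), hsq r, hsq d]

theorem pow_mul_qBinom_mul_prod_geom_sum (hq : q ≠ 0) {m r : ℕ} (hm : 1 ≤ m)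
    (hroot : ∀ k, 1 ≤ k → k ≤ m → q ^ (2 * k) ≠ 1) (hr : r ≤ m) :
    q ^ m.choose 2 * (qBinom q m r * ((∏ k ∈ range r, ∑ i ∈ range (k + 1), (q ^ 2) ^ i) *
        ∏ k ∈ range (m - r), ∑ i ∈ range (k + 1), (q ^ 2) ^ i)) =
      qFact q m * ((q ^ (m - 1)) ^ r * (q ^ 2) ^ (m - r).choose 2) := by
  have hq2 : q ^ 2 ≠ 1 := by simpa using hroot 1 le_rfl hm
  have hr₀ : qFact q r ≠ 0 := qFact_ne_zero hq fun k hk hkr => hroot k hk (hkr.trans hr)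
  have hmr₀ : qFact q (m - r) ≠ 0 :=
    qFact_ne_zero hq fun k hk hkr => hroot k hk (hkr.trans (Nat.sub_le m r))
  have hexponent := choose_two_add_choose_two_add_choose_two r (m - r)
  rw [Nat.add_sub_cancel' hr] at hexponent
  rw [← pow_mul, ← pow_mul, ← pow_add, ← hexponent, prod_geom_sum_sq_eq_pow_mul_qFact hq hq2,
    prod_geom_sum_sq_eq_pow_mul_qFact hq hq2, qBinom]
  field_simp
  ring

end QBinomial

theorem sum_qBinom_mul_symmetrization_eq_zero {K : Type*} [Field K] {m : ℕ} (hm : 1 ≤ m) {q : K}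
    (hq : q ≠ 0) (hroot : ∀ k : ℕ, 1 ≤ k → k ≤ m → q ^ (2 * k) ≠ 1) (w : K) {z : Fin m → K}
    (hz : Function.Injective z) :
    ∑ r ∈ range (m + 1), qBinom q m r * symmetrization (hallLittlewoodKernel (q ^ 2) z)
      (fun k i => if (k : ℕ) < r then w - q ^ (m - 1) * z i else z i - q ^ (m - 1) * w)
      (Function.Embedding.refl (Fin m)) = 0 := by
  have : NeZero m := ⟨Nat.one_le_iff_ne_zero.1 hm⟩
  rw [← mul_eq_zero_iff_left (pow_ne_zero (m.choose 2) hq), ← mul_zero (qFact q m),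
    ← sum_pow_mul_splitSum_eq_zero (pow_right_comm q (m - 1) 2) w hz, mul_sum, mul_sum]
  refine sum_congr rfl fun r hr => ?_
  have hrm : r ≤ m := Nat.lt_succ_iff.1 (mem_range.1 hr)
  rw [symmetrization_ite_lt (n := fun n => ∑ i ∈ range n, (q ^ 2) ^ i)
      (fun s => sum_prod_hallLittlewoodKernel (q ^ 2) hz.injOn) _ _ hrm, map_refl,
    ← mul_assoc (qFact q m), ← pow_mul_qBinom_mul_prod_geom_sum hq hm hroot hrm]
  ring

/-- The combinatorial identity (Ser3) for Hall–Littlewood-type products: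
∑_{σ ∈ S_m} ∑_{r=0}^{m} [m choose r] (∏_{k=1}^{r} (w − q^{m−1} z_{σ(k)}))
(∏_{k=r+1}^{m} (z_{σ(k)} − q^{m−1} w)) ∏_{i<j} (z_{σ(i)} − q² z_{σ(j)})/(z_{σ(i)} − z_{σ(j)}) = 0. -/
theorem combinatorial_identity_Ser3 {K : Type*} [Field K] (m : ℕ) (hm : 1 ≤ m) (q : K)
    (hq : q ≠ 0) (hroot : ∀ k : ℕ, 1 ≤ k → k ≤ m → q ^ (2 * k) ≠ 1)
    (w : K) (z : Fin m → K) (hz : Function.Injective z) :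
    ∑ σ : Equiv.Perm (Fin m), ∑ r ∈ Finset.range (m + 1),
      qBinom q m r *
        (∏ k : Fin m,
          if (k : ℕ) < r then w - q ^ ((m : ℤ) - 1) * z (σ k)
          else z (σ k) - q ^ ((m : ℤ) - 1) * w) *
        ∏ p ∈ Finset.univ.filter (fun p : Fin m × Fin m => p.1 < p.2),
          (z (σ p.1) - q ^ 2 * z (σ p.2)) / (z (σ p.1) - z (σ p.2)) = 0 := by
  have hpow : q ^ ((m : ℤ) - 1) = q ^ (m - 1) := by
    rw [← zpow_natCast, Nat.cast_sub hm, Nat.cast_one]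
  rw [hpow, sum_comm, ← sum_qBinom_mul_symmetrization_eq_zero hm hq hroot w hz]
  refine sum_congr rfl fun r _ => ?_
  rw [symmetrization, mul_sum]
  refine sum_congr rfl fun σ _ => ?_
  rw [mul_assoc, prod_filter, Fintype.prod_prod_type]
  simp only [← prod_filter, filter_lt_eq_Ioi]
  rfl
end
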